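/- Let p and s be distinct odd primes, g a primitive root mod p, and ζ a primitive p-th root of unity in F̄_s. The (p-1)/2 × (p-1)/2 diagonal matrix diag(ζ, ζ^{g²}, ζ^{g⁴}, …, ζ^{g^{p-3}}) together with the cyclic shift matrix are simultaneously conjugate to matrices over F_s if and only if s is a quadratic residue mod p. -/

import Mathlib

/-!
Entries of a matrix over `F̄_s` lie in `F_s` exactly when the Frobenius `σ : x ↦ x ^ s` fixes them.

If `V⁻¹ D V` is fixed by `σ`, then so is its characteristic polynomial, so `σ` permutes the
eigenvalues of `D`. Hence `ζ ^ s` is one of the `ζ ^ (g ^ (2 i))`, and `s ≡ g ^ (2 i)` modulo `p`.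

Conversely, if `s ≡ g ^ (2 m)` modulo `p`, then `σ` acts on the diagonal entries
`d i = ζ ^ (g ^ (2 i))` by the translation `i ↦ i + m`. Let `V` be the Vandermonde matrix of the
`d i`, which is invertible because the `d i` are distinct. Then `σ V` is `V` with its rows
translated by `m`, while `σ D` and `σ C = C` are `D` and `C` with rows and columns both translated
by `m`; this forces `V⁻¹ D V` and `V⁻¹ C V` to be fixed by `σ` (`conj_map_eq_self`).
-/

/-- Descent criterion: if a field endomorphism `f` acts on `V` by permuting its rows by `e`, and on
`M` by permuting both rows and columns by `e`, then it fixes `V⁻¹ M V`. -/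
lemma conj_map_eq_self {ι K : Type*} [Fintype ι] [DecidableEq ι] [Field K] (f : K →+* K)
    (e : ι ≃ ι) (V M : Matrix ι ι K) (hV : IsUnit V)
    (hVe : V.map f = V.submatrix e id) (hMe : M.map f = M.submatrix e e) :
    (V⁻¹ * M * V).map f = V⁻¹ * M * V := by
  have hdet : IsUnit V.det := (Matrix.isUnit_iff_isUnit_det V).1 hV
  set X := V⁻¹ * M * V with hX
  have h1 : V * X = M * V := by
    rw [hX, Matrix.mul_assoc, Matrix.mul_nonsing_inv_cancel_left _ _ hdet]
  have h2 : V.submatrix e id * X.map f = (V * X).submatrix e id := by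
    rw [← hVe, ← Matrix.map_mul, h1, Matrix.map_mul, hVe, hMe, Matrix.submatrix_mul_equiv]
  have h3 : V * X.map f = V * X := by
    ext i j
    simpa [Matrix.mul_apply] using congrFun (congrFun h2 (e.symm i)) j
  rw [← Matrix.nonsing_inv_mul_cancel_left V (X.map f) hdet, h3,
    Matrix.nonsing_inv_mul_cancel_left V X hdet]

/-- If a field endomorphism `f` fixes the entries of a conjugate of `diagonal d`, then it
maps each `d i` to some `d j`. -/
lemma exists_eq_of_conj_map {ι K : Type*} [Fintype ι] [DecidableEq ι] [Field K] (f : K →+* K)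
    (d : ι → K) (V : Matrix ι ι K) (hV : IsUnit V)
    (h : (V⁻¹ * Matrix.diagonal d * V).map f = V⁻¹ * Matrix.diagonal d * V) (i : ι) :
    ∃ j, f (d i) = d j := by
  have hchar : (V⁻¹ * Matrix.diagonal d * V).charpoly
      = ∏ j, (Polynomial.X - Polynomial.C (d j)) := by
    obtain ⟨u, rfl⟩ := hV
    rw [Matrix.charpoly_units_conj', Matrix.charpoly_diagonal]
  have hmap : (∏ j, (Polynomial.X - Polynomial.C (d j))).map f
      = ∏ j, (Polynomial.X - Polynomial.C (d j)) := by
    rw [← hchar, ← Matrix.charpoly_map, h]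
  have h0 := congrArg (Polynomial.eval (f (d i))) hmap
  rw [Polynomial.eval_map_apply, Polynomial.eval_prod, Finset.prod_eq_zero (Finset.mem_univ i)
    (by simp), map_zero, Polynomial.eval_prod] at h0
  obtain ⟨j, -, hj⟩ := Finset.prod_eq_zero_iff.1 h0.symm
  exact ⟨j, by simpa [sub_eq_zero] using hj⟩

/-- Theorem 3.2: for G(p) = ⟨a,b | a^p = b^{(p-1)/2} = 1, b⁻¹ab = a^{g²}⟩ with g a
primitive root mod p, the induced representation (a ↦ diag(ζ^{g^{2i}}), b ↦ cyclic
shift) is realizable over F_s — i.e. the two matrices can be simultaneously conjugated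
into matrices with entries fixed by x ↦ x^s — iff s is a quadratic residue mod p. -/
theorem stmt7 (p s : ℕ) [Fact p.Prime] [Fact s.Prime] (hp : Odd p) (hs : Odd s)
    (hps : p ≠ s) (g : ℕ) (hg : orderOf ((g : ZMod p)) = p - 1)
    (ζ : AlgebraicClosure (ZMod s)) (hζ : IsPrimitiveRoot ζ p)
    (D C : Matrix (Fin ((p - 1) / 2)) (Fin ((p - 1) / 2)) (AlgebraicClosure (ZMod s)))
    (hD : D = Matrix.diagonal fun i : Fin ((p - 1) / 2) => ζ ^ g ^ (2 * (i : ℕ)))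
    (hC : C = Matrix.of fun (i j : Fin ((p - 1) / 2)) =>
      if (i : ℕ) = ((j : ℕ) + 1) % ((p - 1) / 2) then (1 : AlgebraicClosure (ZMod s))
      else 0) :
    (∃ V : Matrix (Fin ((p - 1) / 2)) (Fin ((p - 1) / 2)) (AlgebraicClosure (ZMod s)),
      IsUnit V ∧
      (∀ i j, ((V⁻¹ * D * V) i j) ^ s = (V⁻¹ * D * V) i j) ∧
      (∀ i j, ((V⁻¹ * C * V) i j) ^ s = (V⁻¹ * C * V) i j))
    ↔ IsSquare ((s : ZMod p)) := by
  have hpp : p.Prime := Fact.out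
  have hsp : s.Prime := Fact.out
  have hp3 : 2 < p := by
    have := hpp.two_le
    rcases hp with ⟨k, hk⟩
    omega
  have : CharP (AlgebraicClosure (ZMod s)) s :=
    charP_of_injective_algebraMap (algebraMap (ZMod s) (AlgebraicClosure (ZMod s))).injective s
  have hn2 : p - 1 = 2 * ((p - 1) / 2) := by
    rcases hp with ⟨k, hk⟩
    omega
  have hpow : ∀ a b : ℕ, ζ ^ a = ζ ^ b ↔ (a : ZMod p) = b := by
    intro a b
    rw [ZMod.natCast_eq_natCast_iff, hζ.eq_orderOf,
      (isOfFinOrder_iff_pow_eq_one.2 ⟨p, hpp.pos, hζ.pow_eq_one⟩).pow_eq_pow_iff_modEq]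
  have hg2 : orderOf ((g : ZMod p) ^ 2) = (p - 1) / 2 := by
    rw [orderOf_pow' _ two_ne_zero, hg, Nat.gcd_eq_right (by omega)]
  generalize (p - 1) / 2 = n at *
  have hn : 0 < n := by omega
  have : NeZero n := ⟨hn.ne'⟩
  constructor
  · rintro ⟨V, hV, hVD, -⟩
    subst hD
    obtain ⟨j, hj⟩ := exists_eq_of_conj_map (frobenius (AlgebraicClosure (ZMod s)) s) _ V hV
      (by ext i j; exact hVD i j) (0 : Fin n)
    have hj' : ζ ^ s = ζ ^ g ^ (2 * (j : ℕ)) := by simpa [frobenius_def] using hj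
    refine ⟨(g : ZMod p) ^ (j : ℕ), ?_⟩
    rw [(hpow _ _).1 hj']
    push_cast
    ring
  · rintro ⟨r, hr⟩
    have hs0 : (s : ZMod p) ≠ 0 := by
      rw [Ne, ZMod.natCast_eq_zero_iff, Nat.prime_dvd_prime_iff_eq hpp hsp]
      exact hps
    have hr0 : r ≠ 0 := by
      rintro rfl
      exact hs0 (by simpa using hr)
    have : NeZero (p - 1) := ⟨by omega⟩
    obtain ⟨m, -, rfl⟩ := (hg ▸ IsPrimitiveRoot.orderOf (g : ZMod p) :
      IsPrimitiveRoot (g : ZMod p) (p - 1)).eq_pow_of_pow_eq_one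
        (ZMod.pow_card_sub_one_eq_one hr0)
    set d : Fin n → AlgebraicClosure (ZMod s) := fun i => ζ ^ g ^ (2 * (i : ℕ)) with hd
    have hinj : Function.Injective d := by
      intro i j hij
      have h := (hpow _ _).1 hij
      push_cast at h
      rw [pow_mul, pow_mul] at h
      exact Fin.ext (pow_injOn_Iio_orderOf (by simp [hg2]) (by simp [hg2]) h)
    -- `Fin n` is the cyclic group of order `n`, and `e` is its translation by `m`;
    -- Frobenius acts on the `d i` through `e` because `s = g ^ (2 m)` and `g ^ 2` has order `n`.
    set e : Fin n ≃ Fin n := Equiv.addRight (Fin.ofNat n m) with he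
    have hds : ∀ i, d i ^ s = d (e i) := by
      intro i
      simp only [hd, ← pow_mul]
      rw [hpow]
      push_cast
      rw [hr]
      simp only [he, Equiv.coe_addRight, Fin.val_add, Fin.val_ofNat, Nat.add_mod_mod]
      have hmod := pow_mod_orderOf ((g : ZMod p) ^ 2) ((i : ℕ) + m)
      rw [hg2] at hmod
      rw [pow_mul _ 2 (((i : ℕ) + m) % n), hmod]
      ring
    have hVu : IsUnit (Matrix.vandermonde d) := by
      rw [Matrix.isUnit_iff_isUnit_det, isUnit_iff_ne_zero, Matrix.det_vandermonde_ne_zero_iff]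
      exact hinj
    have hVe : (Matrix.vandermonde d).map (frobenius _ s)
        = (Matrix.vandermonde d).submatrix e id := by
      ext i j
      simp only [Matrix.map_apply, Matrix.vandermonde_apply, Matrix.submatrix_apply, id,
        frobenius_def, ← hds]
      exact pow_right_comm _ _ _
    refine ⟨Matrix.vandermonde d, hVu, fun i j => ?_, fun i j => ?_⟩
    · refine congrFun (congrFun (conj_map_eq_self (frobenius _ s) e _ D hVu hVe ?_) i) j
      ext k l
      simp only [hD, Matrix.map_apply, Matrix.submatrix_apply, Matrix.diagonal_apply,
        frobenius_def, e.injective.eq_iff, ← hds, ite_pow, zero_pow hsp.ne_zero]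
    · refine congrFun (congrFun (conj_map_eq_self (frobenius _ s) e _ C hVu hVe ?_) i) j
      -- `C` is the matrix of translation by `1`, which commutes with translation by `m`.
      have hshift : ∀ i j : Fin n, (i : ℕ) = ((j : ℕ) + 1) % n ↔ i = j + Fin.ofNat n 1 := by
        intro i j
        simp [Fin.ext_iff, Fin.val_add]
      ext k l
      simp only [hC, hshift, Matrix.map_apply, Matrix.submatrix_apply, Matrix.of_apply,
        frobenius_def, ite_pow, zero_pow hsp.ne_zero, one_pow, he, Equiv.coe_addRight]
      rw [add_right_comm l]
      simp only [add_left_inj]
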